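/- Let T ⊂ ℝ³ be a tetrahedron with affinely independent vertices v₀, v₁, v₂, v₃. Let r^v ≥ 1 be an integer, set r₂ = (r^v, 0, −1), and let k ≥ 2r^v + 1; set r₃ = r₂ ⊖ 1 = (r^v−1, −1, −1). Assume S₃(T, r₃, k−1) is nonempty. Then {div u : u ∈ 𝔹_k^{div}(T; r₂)} = {p ∈ B_{k−1}(T; r₃) : ∫_T p dx = 0}, where 𝔹_k^{div}(T; r₂) = {u ∈ 𝔹_k³(T; r₂) : u·n = 0 on ∂T}. -/

import Mathlib

/-!
A tangential field `u` on the simplex is a combination of the edge directions `b i - b j` with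
coefficients `λ_j Dλ_i(u) - λ_i Dλ_j(u)`, which vanish on both faces `λ_i = 0` and `λ_j = 0`. Along
every line parallel to `b i - b j` such a coefficient therefore vanishes where the line enters and
leaves the simplex, so by translation invariance of Lebesgue measure and the fundamental theorem of
calculus its edge derivative integrates to zero, and hence so does `div u`.

Conversely, `div (λ^α / α! • (b j - b i))` is the difference of the normalized monomials with
exponents `α - e_j` and `α - e_i`. Any two exponents of the target lattice are joined by such unit
transfers, so the target space is the range of the divergence plus the span of a single monomial.
That monomial has positive integral, so its coefficient is zero when the total integral is.
-/

open scoped BigOperators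
open MeasureTheory

/-- The interior lattice set `S₃(T, r, k)` for a smoothness vector `r = (rᵛ, rᵉ, r^f)`. -/
def interiorLattice (k : ℕ) (rv re rf : ℤ) : Set (Fin 4 → ℕ) :=
  {α | ∑ i, α i = k ∧ ∀ f : Finset (Fin 4), f.Nonempty → f ≠ Finset.univ →
    ((f.card = 1 → rv < ∑ i ∈ fᶜ, (α i : ℤ)) ∧
     (f.card = 2 → re < ∑ i ∈ fᶜ, (α i : ℤ)) ∧
     (f.card = 3 → rf < ∑ i ∈ fᶜ, (α i : ℤ)))}

/-- The Bernstein monomial `λ^α` on `ℝ³`. -/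
def bernBary3 (lam : Fin 4 → ((Fin 3 → ℝ) →ᵃ[ℝ] ℝ)) (α : Fin 4 → ℕ) :
    (Fin 3 → ℝ) → ℝ :=
  fun x => ∏ i, (lam i x) ^ (α i)

/-- The bubble space `B_k(T; r) = span{λ^α : α ∈ S₃(T, r, k)}`. -/
def bubbleSpace (lam : Fin 4 → ((Fin 3 → ℝ) →ᵃ[ℝ] ℝ)) (k : ℕ) (rv re rf : ℤ) :
    Submodule ℝ ((Fin 3 → ℝ) → ℝ) :=
  Submodule.span ℝ (bernBary3 lam '' interiorLattice k rv re rf)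

/-- The divergence `div u = ∂₁u₁ + ∂₂u₂ + ∂₃u₃` of a vector field on `ℝ³`. -/
noncomputable def diverg (u : (Fin 3 → ℝ) → (Fin 3 → ℝ)) : (Fin 3 → ℝ) → ℝ :=
  fun x => ∑ m, fderiv ℝ (fun y => u y m) x (Pi.single m 1)

/-- Vanishing of the normal trace `u ⋅ n = 0` on `∂T` for the tetrahedron with vertices
`v₀, …, v₃`: on each face (the convex hull of the three vertices `v_i`, `i ≠ j`), `u` is
orthogonal to every vector `w` normal to that face. -/
def normalTraceZero (v : Fin 4 → (Fin 3 → ℝ)) (u : (Fin 3 → ℝ) → (Fin 3 → ℝ)) : Prop :=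
  ∀ j : Fin 4, ∀ x ∈ convexHull ℝ (v '' {i | i ≠ j}), ∀ w : Fin 3 → ℝ,
    (∀ a, a ≠ j → ∀ b, b ≠ j → ∑ m, w m * (v a m - v b m) = 0) →
    ∑ m, w m * u x m = 0

section LineIntegrals

open Set

variable {F : Type*} [NormedAddCommGroup F] [NormedSpace ℝ F]

theorem hasDerivAt_indicator_of_notMem_frontier {f f' : ℝ → F} {s : Set ℝ} {x : ℝ}
    (hf : HasDerivAt f (f' x) x) (hx : x ∉ frontier s) :
    HasDerivAt (s.indicator f) (s.indicator f' x) x := by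
  by_cases hxs : x ∈ s
  · have hs : s ∈ nhds x := by
      rw [← mem_interior_iff_mem_nhds]
      exact by_contra fun h => hx ⟨subset_closure hxs, h⟩
    rw [indicator_of_mem hxs]
    exact hf.congr_of_eventuallyEq (Filter.mem_of_superset hs fun y hy => indicator_of_mem hy f)
  · have hs : sᶜ ∈ nhds x := by
      rw [← mem_interior_iff_mem_nhds, interior_compl]
      exact fun h => hx ⟨h, fun h' => hxs (interior_subset h')⟩
    rw [indicator_of_notMem hxs]
    exact (hasDerivAt_const x 0).congr_of_eventuallyEq
      (Filter.mem_of_superset hs fun y hy => indicator_of_notMem hy f)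

variable [CompleteSpace F]

theorem intervalIntegral_indicator_Icc_of_hasDerivAt {φ φ' : ℝ → F}
    (hφ : ∀ t, HasDerivAt φ (φ' t) t) (hφ' : Continuous φ') {p q : ℝ}
    (hpq : p ≤ q → φ p = 0 ∧ φ q = 0) (s t : ℝ) :
    ∫ x in s..t, (Icc p q).indicator φ' x =
      (Icc p q).indicator φ t - (Icc p q).indicator φ s := by
  rcases lt_or_ge q p with hlt | hle
  · simp [Icc_eq_empty hlt.not_ge]
  have hfr : frontier (Icc p q) = {p, q} := frontier_Icc hle
  refine integral_eq_of_hasDerivAt_off_countable _ _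
    (countable_singleton q |>.insert p) (Continuous.continuousOn ?_) (fun x hx => ?_) ?_
  · refine continuous_indicator ?_ (continuous_iff_continuousAt.2
      fun x => (hφ x).continuousAt).continuousOn
    rw [hfr]
    rintro x (rfl | rfl)
    exacts [(hpq hle).1, (hpq hle).2]
  · exact hasDerivAt_indicator_of_notMem_frontier (hφ x) (hfr ▸ hx.2)
  · exact ⟨hφ'.integrableOn_Ioc.indicator measurableSet_Icc,
      hφ'.integrableOn_Ioc.indicator measurableSet_Icc⟩

variable {E : Type*} [NormedAddCommGroup E] [NormedSpace ℝ E] [FiniteDimensional ℝ E]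
  [MeasurableSpace E] [BorelSpace E] {μ : Measure E} [μ.IsAddHaarMeasure]

theorem integral_intervalIntegral_comp_add_smul {f : E → F} (hf : Integrable f μ) (w : E)
    (s t : ℝ) :
    ∫ x, (∫ r in s..t, f (x + r • w)) ∂μ = (t - s) • ∫ x, f x ∂μ := by
  have : IsFiniteMeasure (volume.restrict (uIoc s t)) := ⟨by simp [uIoc]⟩
  have hmp : MeasurePreserving (fun y : ℝ × E => (y.1, y.2 + y.1 • w))
      ((volume.restrict (uIoc s t)).prod μ) ((volume.restrict (uIoc s t)).prod μ) :=
    (MeasurePreserving.id _).skew_product (g := fun r x => x + r • w) (by fun_prop)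
      (.of_forall fun r => map_add_right_eq_self μ (r • w))
  have hint : Integrable (fun y : ℝ × E => f (y.2 + y.1 • w))
      ((volume.restrict (uIoc s t)).prod μ) :=
    hmp.integrable_comp_of_integrable (hf.comp_snd (volume.restrict (uIoc s t)))
  rw [← intervalIntegral_integral_swap (f := fun r x => f (x + r • w)) hint]
  simp [integral_add_right_eq_self]

theorem setIntegral_fderiv_eq_zero_of_forall_line {K : Set E} (hK : IsCompact K)
    {g : E → F} (hg : ContDiff ℝ 1 g) {w : E}
    (hline : ∀ x, ∃ p q : ℝ, (∀ t : ℝ, x + t • w ∈ K ↔ t ∈ Icc p q) ∧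
      (p ≤ q → g (x + p • w) = 0 ∧ g (x + q • w) = 0)) :
    ∫ x in K, fderiv ℝ g x w ∂μ = 0 := by
  have hK' : MeasurableSet K := hK.measurableSet
  have hg' : Continuous fun x => fderiv ℝ g x w :=
    (hg.continuous_fderiv one_ne_zero).clm_apply continuous_const
  have hind {f : E → F} (hf : Continuous f) : Integrable (K.indicator f) μ :=
    (integrable_indicator_iff hK').2 (hf.continuousOn.integrableOn_compact hK)
  have hftc (x : E) : ∫ t in (0 : ℝ)..1, K.indicator (fun y => fderiv ℝ g y w) (x + t • w) =
      K.indicator g (x + w) - K.indicator g x := by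
    obtain ⟨p, q, hpq, hg0⟩ := hline x
    have hpre (f : E → F) (t : ℝ) :
        K.indicator f (x + t • w) = (Icc p q).indicator (fun r => f (x + r • w)) t := by
      by_cases ht : t ∈ Icc p q <;> simp [indicator, hpq, ht]
    have hderiv (t : ℝ) : HasDerivAt (fun r : ℝ => g (x + r • w)) (fderiv ℝ g (x + t • w) w) t := by
      have hmap : HasDerivAt (fun r : ℝ => x + r • w) w t := by
        simpa using ((hasDerivAt_id t).smul_const w).const_add x
      exact (hg.differentiable one_ne_zero _).hasFDerivAt.comp_hasDerivAt t hmap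
    simp only [hpre]
    rw [intervalIntegral_indicator_Icc_of_hasDerivAt hderiv (hg'.comp (by fun_prop)) hg0,
      ← hpre, ← hpre, one_smul, zero_smul, add_zero]
  calc ∫ x in K, fderiv ℝ g x w ∂μ
      = ∫ x, (∫ t in (0 : ℝ)..1, K.indicator (fun y => fderiv ℝ g y w) (x + t • w)) ∂μ := by
        rw [integral_intervalIntegral_comp_add_smul (hind hg'), sub_zero, one_smul,
          integral_indicator hK']
    _ = ∫ x, K.indicator g (x + w) - K.indicator g x ∂μ := by simp only [hftc]
    _ = 0 := by
        have hgK := hind hg.continuous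
        rw [integral_sub (hgK.comp_add_right w) hgK, integral_add_right_eq_self, sub_self]

end LineIntegrals

section AffineMap

variable {E F : Type*} [NormedAddCommGroup E] [NormedSpace ℝ E] [FiniteDimensional ℝ E]
  [NormedAddCommGroup F] [NormedSpace ℝ F]

theorem contDiff_affineMap (f : E →ᵃ[ℝ] F) {n : WithTop ℕ∞} : ContDiff ℝ n f :=
  ContinuousAffineMap.contDiff ⟨f, f.continuous_of_finiteDimensional⟩

theorem hasFDerivAt_affineMap (f : E →ᵃ[ℝ] F) (x : E) :
    HasFDerivAt f (LinearMap.toContinuousLinearMap f.linear) x :=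
  ContinuousAffineMap.hasFDerivAt ⟨f, f.continuous_of_finiteDimensional⟩

end AffineMap

theorem trace_fderiv_smul_const {E : Type*} [NormedAddCommGroup E] [NormedSpace ℝ E]
    [FiniteDimensional ℝ E] {c : E → ℝ} {x : E} (hc : DifferentiableAt ℝ c x) (w : E) :
    LinearMap.trace ℝ E (fderiv ℝ (fun y => c y • w) x).toLinearMap = fderiv ℝ c x w := by
  rw [fderiv_smul_const hc w]
  exact LinearMap.trace_smulRight _ _

section Simplex

theorem exists_affineBasis_coord_eq {ι k V : Type*} [Fintype ι] [Field k] [AddCommGroup V]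
    [Module k V] [FiniteDimensional k V] [DecidableEq ι] {v : ι → V} (hv : AffineIndependent k v)
    (hcard : Fintype.card ι = Module.finrank k V + 1) {lam : ι → V →ᵃ[k] k}
    (hlam : ∀ i j, lam i (v j) = if i = j then 1 else 0) :
    ∃ b : AffineBasis ι k V, v = b ∧ lam = fun i => b.coord i := by
  have hspan : affineSpan k (Set.range v) = ⊤ :=
    hv.affineSpan_eq_top_iff_card_eq_finrank_add_one.2 hcard
  refine ⟨⟨v, hv, hspan⟩, rfl, funext fun i => AffineMap.ext_on hspan ?_⟩
  rintro _ ⟨j, rfl⟩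
  rw [hlam]
  exact (AffineBasis.coord_apply ⟨v, hv, hspan⟩ i j).symm

variable {ι E : Type*} [NormedAddCommGroup E] [NormedSpace ℝ E] (b : AffineBasis ι ℝ E)

theorem barycentric_coord_linear_sub [DecidableEq ι] (l i j : ι) :
    (b.coord l).linear (b j - b i) = (if l = j then 1 else 0) - if l = i then 1 else 0 := by
  rw [← vsub_eq_sub, AffineMap.linearMap_vsub, b.coord_apply, b.coord_apply, vsub_eq_sub]

theorem barycentric_coord_linear_eq_sub (i : ι) (w : E) :
    (b.coord i).linear w = b.coord i w - b.coord i 0 := by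
  rw [← vsub_eq_sub, ← AffineMap.linearMap_vsub, vsub_eq_sub, sub_zero]

theorem sum_barycentric_coord_linear [Fintype ι] (w : E) : ∑ i, (b.coord i).linear w = 0 := by
  simp only [barycentric_coord_linear_eq_sub, Finset.sum_sub_distrib,
    b.sum_coord_apply_eq_one, sub_self]

theorem sum_barycentric_coord_linear_smul [Fintype ι] (w : E) :
    ∑ i, (b.coord i).linear w • b i = w := by
  simp only [barycentric_coord_linear_eq_sub, sub_smul, Finset.sum_sub_distrib,
    b.linear_combination_coord_eq_self, sub_zero]

theorem barycentric_coord_add_smul_sub [DecidableEq ι] (l i j : ι) (x : E) (t : ℝ) :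
    b.coord l (x + t • (b j - b i)) =
      b.coord l x + t * ((if l = j then 1 else 0) - if l = i then 1 else 0) := by
  rw [add_comm, ← vadd_eq_add, AffineMap.map_vadd, map_smul, barycentric_coord_linear_sub,
    smul_eq_mul, vadd_eq_add, add_comm]

theorem mem_convexHull_range_iff {x : E} :
    x ∈ convexHull ℝ (Set.range b) ↔ ∀ i, 0 ≤ b.coord i x := by
  rw [b.convexHull_eq_nonneg_coord, Set.mem_ofPred_eq]

theorem mem_convexHull_image_iff [Finite ι] {s : Set ι} {x : E} :
    x ∈ convexHull ℝ (b '' s) ↔ (∀ i, 0 ≤ b.coord i x) ∧ ∀ i ∉ s, b.coord i x = 0 := by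
  classical
  have := Fintype.ofFinite ι
  refine ⟨fun hx => ⟨?_, fun i hi => ?_⟩, fun ⟨hx, hs⟩ => ?_⟩
  · exact (mem_convexHull_range_iff b).1 (convexHull_mono (Set.image_subset_range b s) hx)
  · suffices convexHull ℝ (b '' s) ⊆ b.coord i ⁻¹' {0} from this hx
    refine convexHull_min ?_ ((convex_singleton 0).affine_preimage (b.coord i))
    rintro _ ⟨j, hj, rfl⟩
    exact b.coord_apply_ne fun h => hi (h ▸ hj)
  · have hsum : ∑ i with i ∈ s, b.coord i x = 1 := by
      rw [← b.sum_coord_apply_eq_one x]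
      exact Finset.sum_filter_of_ne fun i _ h => by_contra fun hi => h (hs i hi)
    have hcomb : ∑ i with i ∈ s, b.coord i x • b i = x := by
      conv_rhs => rw [← b.linear_combination_coord_eq_self x]
      exact Finset.sum_filter_of_ne fun i _ h => by_contra fun hi => h (by rw [hs i hi, zero_smul])
    rw [← hcomb]
    exact (convex_convexHull ℝ _).sum_mem (fun i _ => hx i) hsum fun i hi =>
      subset_convexHull ℝ _ ⟨i, (Finset.mem_filter.1 hi).2, rfl⟩

theorem exists_line_mem_convexHull_iff {i j : ι} (hij : i ≠ j) (x : E) :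
    ∃ p q : ℝ,
      (∀ t : ℝ, x + t • (b j - b i) ∈ convexHull ℝ (Set.range b) ↔ t ∈ Set.Icc p q) ∧
      (p ≤ q → b.coord j (x + p • (b j - b i)) = 0 ∧ b.coord i (x + q • (b j - b i)) = 0) := by
  classical
  have hi (t : ℝ) : b.coord i (x + t • (b j - b i)) = b.coord i x - t := by
    rw [barycentric_coord_add_smul_sub]; simp [hij, sub_eq_add_neg]
  have hj (t : ℝ) : b.coord j (x + t • (b j - b i)) = b.coord j x + t := by
    rw [barycentric_coord_add_smul_sub]; simp [hij.symm]
  have hl (t : ℝ) {l : ι} (hli : l ≠ i) (hlj : l ≠ j) :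
      b.coord l (x + t • (b j - b i)) = b.coord l x := by
    rw [barycentric_coord_add_smul_sub]; simp [hli, hlj]
  by_cases hx : ∀ l, l ≠ i → l ≠ j → 0 ≤ b.coord l x
  · refine ⟨-b.coord j x, b.coord i x, fun t => ?_, fun _ => ⟨?_, ?_⟩⟩
    · rw [mem_convexHull_range_iff, Set.mem_Icc]
      refine ⟨fun h => ⟨?_, ?_⟩, fun h l => ?_⟩
      · linarith [hj t ▸ h j]
      · linarith [hi t ▸ h i]
      · rcases eq_or_ne l i with rfl | hli
        · rw [hi]; linarith
        rcases eq_or_ne l j with rfl | hlj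
        · rw [hj]; linarith
        exact (hl t hli hlj).symm ▸ hx l hli hlj
    · rw [hj, add_neg_cancel]
    · rw [hi, sub_self]
  · push Not at hx
    obtain ⟨l, hli, hlj, hlx⟩ := hx
    refine ⟨1, 0, fun t => iff_of_false (fun h => ?_) (by simp), fun h => (by norm_num at h)⟩
    exact hlx.not_ge (hl t hli hlj ▸ (mem_convexHull_range_iff b).1 h l)

/-- The coefficients `λ_j Dλ_i(u) - λ_i Dλ_j(u)` of a vector field `u` along the edges `b i - b j`
of a simplex, where `λ = b.coord`. The decomposition of `u` along the edges is not unique: these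
coefficients are chosen antisymmetric in `i` and `j`, so that both the faces `λ_i = 0` and
`λ_j = 0` kill them when `u` is tangential. -/
noncomputable def edgeCoeff (u : E → E) (i j : ι) (x : E) : ℝ :=
  b.coord j x * (b.coord i).linear (u x) - b.coord i x * (b.coord j).linear (u x)

theorem sum_edgeCoeff_smul [Fintype ι] (u : E → E) (x : E) :
    ∑ i, ∑ j, edgeCoeff b u i j x • (b i - b j) = (2 : ℝ) • u x := by
  have hrow (i : ι) : ∑ j, (b.coord j x * (b.coord i).linear (u x)) • (b i - b j) =
      (b.coord i).linear (u x) • b i - (b.coord i).linear (u x) • x := by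
    simp only [mul_comm (b.coord _ x), mul_smul, ← Finset.smul_sum, smul_sub,
      Finset.sum_sub_distrib, ← Finset.sum_smul, b.sum_coord_apply_eq_one, one_smul,
      b.linear_combination_coord_eq_self]
  have hhalf : ∑ i, ∑ j, (b.coord j x * (b.coord i).linear (u x)) • (b i - b j) = u x := by
    simp only [hrow, Finset.sum_sub_distrib, ← Finset.sum_smul, sum_barycentric_coord_linear,
      sum_barycentric_coord_linear_smul, zero_smul, sub_zero]
  have hswap : ∑ i, ∑ j, (b.coord i x * (b.coord j).linear (u x)) • (b i - b j) = -u x := by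
    conv_rhs => rw [← hhalf, Finset.sum_comm]
    simp only [← Finset.sum_neg_distrib, ← smul_neg, neg_sub]
  simp only [edgeCoeff, sub_smul, Finset.sum_sub_distrib, hhalf, hswap, two_smul, sub_neg_eq_add]

theorem contDiff_edgeCoeff [FiniteDimensional ℝ E] {u : E → E} {n : WithTop ℕ∞}
    (hu : ContDiff ℝ n u) (i j : ι) : ContDiff ℝ n (edgeCoeff b u i j) := by
  have hlin (i : ι) : ContDiff ℝ n fun x => (b.coord i).linear (u x) :=
    (LinearMap.toContinuousLinearMap (b.coord i).linear).contDiff.comp hu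
  exact ((contDiff_affineMap (b.coord j)).mul (hlin i)).sub
    ((contDiff_affineMap (b.coord i)).mul (hlin j))

theorem trace_fderiv_eq_sum_edgeCoeff [Fintype ι] [FiniteDimensional ℝ E] {u : E → E}
    (hu : ContDiff ℝ 1 u) (x : E) :
    LinearMap.trace ℝ E (fderiv ℝ u x).toLinearMap =
      (1 / 2) * ∑ p : ι × ι, fderiv ℝ (edgeCoeff b u p.1 p.2) x (b p.1 - b p.2) := by
  have hd (p : ι × ι) : DifferentiableAt ℝ (edgeCoeff b u p.1 p.2) x :=
    (contDiff_edgeCoeff b hu p.1 p.2).differentiable one_ne_zero x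
  have hdecomp : u =
      (1 / 2 : ℝ) • ∑ p : ι × ι, fun y => edgeCoeff b u p.1 p.2 y • (b p.1 - b p.2) := by
    funext y
    simp only [Pi.smul_apply, Finset.sum_apply, Fintype.sum_prod_type, sum_edgeCoeff_smul]
    module
  conv_lhs => rw [hdecomp]
  rw [fderiv_const_smul (.sum fun p _ => (hd p).smul_const _),
    fderiv_sum fun p _ => (hd p).smul_const _]
  simp [trace_fderiv_smul_const (hd _)]

variable [Finite ι] [MeasurableSpace E] [BorelSpace E] {μ : Measure E} [μ.IsAddHaarMeasure]

theorem setIntegral_fderiv_edge_eq_zero {g : E → ℝ} (hg : ContDiff ℝ 1 g) {i j : ι} (hij : i ≠ j)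
    (hi : ∀ x ∈ convexHull ℝ (Set.range b), b.coord i x = 0 → g x = 0)
    (hj : ∀ x ∈ convexHull ℝ (Set.range b), b.coord j x = 0 → g x = 0) :
    ∫ x in convexHull ℝ (Set.range b), fderiv ℝ g x (b j - b i) ∂μ = 0 := by
  have := b.finiteDimensional
  refine setIntegral_fderiv_eq_zero_of_forall_line
    ((Set.finite_range b).isCompact_convexHull (𝕜 := ℝ)) hg fun x => ?_
  obtain ⟨p, q, hmem, hzero⟩ := exists_line_mem_convexHull_iff b hij x
  refine ⟨p, q, hmem, fun hpq => ⟨hj _ ?_ (hzero hpq).1, hi _ ?_ (hzero hpq).2⟩⟩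
  · exact (hmem p).2 (Set.left_mem_Icc.2 hpq)
  · exact (hmem q).2 (Set.right_mem_Icc.2 hpq)

theorem setIntegral_trace_fderiv_eq_zero_of_tangent {u : E → E} (hu : ContDiff ℝ 1 u)
    (htan : ∀ i, ∀ x ∈ convexHull ℝ (Set.range b), b.coord i x = 0 →
      (b.coord i).linear (u x) = 0) :
    ∫ x in convexHull ℝ (Set.range b), LinearMap.trace ℝ E (fderiv ℝ u x).toLinearMap ∂μ = 0 := by
  have := b.finiteDimensional
  have := Fintype.ofFinite ι
  have hcompact := (Set.finite_range b).isCompact_convexHull (𝕜 := ℝ)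
  have hint (p : ι × ι) : IntegrableOn (fun x => fderiv ℝ (edgeCoeff b u p.1 p.2) x (b p.1 - b p.2))
      (convexHull ℝ (Set.range b)) μ :=
    (((contDiff_edgeCoeff b hu p.1 p.2).continuous_fderiv one_ne_zero).clm_apply
      continuous_const).continuousOn.integrableOn_compact hcompact
  simp only [trace_fderiv_eq_sum_edgeCoeff b hu]
  rw [integral_const_mul, integral_finsetSum _ fun p _ => hint p]
  refine mul_eq_zero_of_right _ (Finset.sum_eq_zero fun p _ => ?_)
  rcases eq_or_ne p.1 p.2 with heq | hne
  · simp [heq]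
  · refine setIntegral_fderiv_edge_eq_zero b (contDiff_edgeCoeff b hu p.1 p.2) hne.symm ?_ ?_ <;>
      intro x hx h <;> simp only [edgeCoeff, h, htan _ x hx h, mul_zero, zero_mul, sub_zero]

end Simplex

section BernsteinMonomials

variable (lam : Fin 4 → ((Fin 3 → ℝ) →ᵃ[ℝ] ℝ))

theorem contDiff_bernBary3 (α : Fin 4 → ℕ) {n : WithTop ℕ∞} : ContDiff ℝ n (bernBary3 lam α) :=
  contDiff_prod fun i _ => (contDiff_affineMap (lam i)).pow (α i)

variable {lam} in
theorem contDiff_of_mem_bubbleSpace {k : ℕ} {rv re rf : ℤ} {f : (Fin 3 → ℝ) → ℝ}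
    (hf : f ∈ bubbleSpace lam k rv re rf) {n : WithTop ℕ∞} : ContDiff ℝ n f := by
  induction hf using Submodule.span_induction with
  | mem f hf =>
    obtain ⟨α, -, rfl⟩ := hf
    exact contDiff_bernBary3 lam α
  | zero => exact contDiff_const
  | add f g _ _ hf hg => exact hf.add hg
  | smul c f _ hf => exact hf.const_smul c

theorem fderiv_bernBary3 (α : Fin 4 → ℕ) (w : Fin 3 → ℝ) :
    (fun x => fderiv ℝ (bernBary3 lam α) x w) =
      ∑ i, (α i * (lam i).linear w) • bernBary3 lam (α - Pi.single i 1) := by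
  funext x
  have hpow (i : Fin 4) := (hasFDerivAt_affineMap (lam i) x).pow (α i)
  have hprod : HasFDerivAt (bernBary3 lam α) _ x := .finsetProd fun i _ => hpow i
  rw [hprod.fderiv]
  simp only [sum_apply, smul_apply, Finset.sum_apply,
    Pi.smul_apply, LinearMap.coe_toContinuousLinearMap', smul_eq_mul]
  refine Finset.sum_congr rfl fun i _ => ?_
  rw [bernBary3, ← Finset.mul_prod_erase _ _ (Finset.mem_univ i)]
  have herase : ∏ j ∈ Finset.univ.erase i, lam j x ^ (α - Pi.single i 1 : Fin 4 → ℕ) j =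
      ∏ j ∈ Finset.univ.erase i, lam j x ^ α j :=
    Finset.prod_congr rfl fun j hj => by simp [(Finset.mem_erase.1 hj).1]
  rw [herase, Pi.sub_apply, Pi.single_eq_same, nsmul_eq_mul]
  ring

end BernsteinMonomials

section InteriorLattice

theorem exists_add_single_one_eq {ι : Type*} [DecidableEq ι] {α : ι → ℕ} {i : ι} (hi : α i ≠ 0) :
    ∃ δ : ι → ℕ, δ + Pi.single i 1 = α := by
  refine ⟨α - Pi.single i 1, tsub_add_cancel_of_le fun j => ?_⟩
  rcases eq_or_ne j i with rfl | hj
  · simpa using Nat.one_le_iff_ne_zero.2 hi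
  · simp [hj]

theorem sum_add_single_one {ι : Type*} [Fintype ι] [DecidableEq ι] (δ : ι → ℕ) (i : ι) :
    ∑ j, (δ + Pi.single i 1 : ι → ℕ) j = ∑ j, δ j + 1 := by
  simp [Finset.sum_add_distrib]

theorem unit_transfer_induction {ι : Type*} [Fintype ι] [DecidableEq ι] {n : ℕ} {m : ι → ℕ}
    {P : (ι → ℕ) → Prop}
    (step : ∀ (δ : ι → ℕ) (i j : ι), ∑ l, δ l + 1 = n → δ + Pi.single i 1 ≤ m →
      δ + Pi.single j 1 ≤ m → P (δ + Pi.single i 1) → P (δ + Pi.single j 1))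
    {β γ : ι → ℕ} (hβ : β ≤ m) (hγ : γ ≤ m) (hβn : ∑ i, β i = n) (hγn : ∑ i, γ i = n)
    (h : P β) : P γ := by
  induction hd : ∑ i, (β i - γ i) using Nat.strong_induction_on generalizing β with
  | _ d ih =>
    by_cases hle : β ≤ γ
    · have heq : β = γ := funext fun i =>
        (Finset.sum_eq_sum_iff_of_le fun i _ => hle i).1 (hβn.trans hγn.symm) i (Finset.mem_univ i)
      exact heq ▸ h
    have hge : ¬ γ ≤ β := fun hge => hle (funext fun i =>
      (Finset.sum_eq_sum_iff_of_le fun i _ => hge i).1 (hγn.trans hβn.symm) i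
        (Finset.mem_univ i) : γ = β).ge
    obtain ⟨i, hi⟩ := not_forall.1 hle
    obtain ⟨j, hj⟩ := not_forall.1 hge
    obtain ⟨δ, rfl⟩ := exists_add_single_one_eq (α := β) (i := i) (by lia)
    simp only [Pi.add_apply, Pi.single_apply] at hi hj
    have hδj : δ + Pi.single j 1 ≤ m := fun l => by
      have hl := hβ l
      simp only [Pi.add_apply, Pi.single_apply] at hl ⊢
      split_ifs at hl hj ⊢ with hlj <;> first | lia | (subst hlj; have := hγ l; lia)
    have hδ : ∑ l, δ l + 1 = n := by rwa [sum_add_single_one] at hβn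
    refine ih _ ?_ hδj (by rwa [sum_add_single_one]) (step δ i j hδ hβ hδj h) rfl
    rw [← hd]
    refine Finset.sum_lt_sum (fun l _ => ?_) ⟨i, Finset.mem_univ i, ?_⟩ <;>
      simp only [Pi.add_apply, Pi.single_apply] <;> split_ifs at hj hi ⊢ <;> grind

theorem mem_interiorLattice_iff {k : ℕ} {rv re rf : ℤ} {α : Fin 4 → ℕ} :
    α ∈ interiorLattice k rv re rf ↔ ∑ i, α i = k ∧ (∀ i, α i + rv < k) ∧
      (∀ i j, i ≠ j → re < α i + α j) ∧ ∀ i, rf < α i := by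
  have hcompl (hα : ∑ i, α i = k) (i : Fin 4) : ∑ j ∈ {i}ᶜ, (α j : ℤ) = k - α i := by
    have h := Finset.sum_add_sum_compl {i} fun j => (α j : ℤ)
    rw [← hα, Nat.cast_sum, ← h, Finset.sum_singleton, add_sub_cancel_left]
  refine ⟨fun ⟨hα, h⟩ => ⟨hα, fun i => ?_, fun i j hij => ?_, fun i => ?_⟩,
    fun ⟨hα, hv, he, hf⟩ => ⟨hα, fun f _ _ => ⟨fun hcard => ?_, fun hcard => ?_, fun hcard => ?_⟩⟩⟩
  · have := (h {i} (by simp) (by decide +revert)).1 (by simp)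
    rw [hcompl hα] at this
    linarith
  · have := (h {i, j}ᶜ (by decide +revert) (by decide +revert)).2.1 (by decide +revert)
    rwa [compl_compl, Finset.sum_pair hij] at this
  · have := (h {i}ᶜ (by decide +revert) (by simp)).2.2 (by decide +revert)
    rwa [compl_compl, Finset.sum_singleton] at this
  · obtain ⟨i, rfl⟩ := Finset.card_eq_one.1 hcard
    rw [hcompl hα]
    linarith [hv i]
  · obtain ⟨i, j, hij, hf⟩ := Finset.card_eq_two.1
      (show fᶜ.card = 2 by rw [Finset.card_compl, hcard, Fintype.card_fin])
    rw [hf, Finset.sum_pair hij]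
    exact he i j hij
  · obtain ⟨i, hi⟩ := Finset.card_eq_one.1
      (show fᶜ.card = 1 by rw [Finset.card_compl, hcard, Fintype.card_fin])
    rw [hi, Finset.sum_singleton]
    exact hf i

theorem mem_interiorLattice_neg_one_iff {k : ℕ} {r : ℤ} {α : Fin 4 → ℕ} :
    α ∈ interiorLattice k r (-1) (-1) ↔ ∑ i, α i = k ∧ ∀ i, α i + r < k := by
  rw [mem_interiorLattice_iff, and_congr_right_iff, and_iff_left_iff_imp]
  exact fun _ _ => ⟨fun i j _ => by lia, fun i => by lia⟩

theorem mem_interiorLattice_of_add_single {k : ℕ} {rv re rf : ℤ} {δ : Fin 4 → ℕ} {i : Fin 4}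
    (h : δ + Pi.single i 1 ∈ interiorLattice (k + 1) rv re rf) :
    δ ∈ interiorLattice k (max (rv - 1) (-1)) (max (re - 1) (-1)) (max (rf - 1) (-1)) := by
  obtain ⟨hsum, hv, he, hf⟩ := mem_interiorLattice_iff.1 h
  simp only [Pi.add_apply, Pi.single_apply] at hsum hv he hf
  have hδ : ∑ j, δ j = k := by simpa [Finset.sum_add_distrib] using hsum
  refine mem_interiorLattice_iff.2 ⟨hδ, fun j => ?_, fun a b hab => ?_, fun j => ?_⟩
  · have hle : δ j ≤ k := hδ ▸ Finset.single_le_sum (fun _ _ => Nat.zero_le _) (Finset.mem_univ j)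
    have := hv j
    split_ifs at this <;> lia
  · have := he a b hab
    split_ifs at this <;> lia
  · have := hf j
    split_ifs at this <;> lia

end InteriorLattice

section Divergence

theorem diverg_eq_trace {u : (Fin 3 → ℝ) → Fin 3 → ℝ} {x : Fin 3 → ℝ}
    (hu : DifferentiableAt ℝ u x) :
    diverg u x = LinearMap.trace ℝ (Fin 3 → ℝ) (fderiv ℝ u x).toLinearMap := by
  rw [LinearMap.trace_eq_matrix_trace ℝ (Pi.basisFun ℝ (Fin 3)), Matrix.trace, diverg]
  refine Finset.sum_congr rfl fun m _ => ?_
  rw [Matrix.diag_apply, LinearMap.toMatrix_apply, fderiv_apply hu]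
  simp

theorem diverg_smul_const {c : (Fin 3 → ℝ) → ℝ} (hc : Differentiable ℝ c) (w : Fin 3 → ℝ) :
    diverg (fun x => c x • w) = fun x => fderiv ℝ c x w :=
  funext fun x => by
    rw [diverg_eq_trace ((hc x).smul_const w), trace_fderiv_smul_const (hc x)]

variable {lam : Fin 4 → ((Fin 3 → ℝ) →ᵃ[ℝ] ℝ)} {k : ℕ} {rv re rf : ℤ}

theorem fderiv_mem_bubbleSpace {f : (Fin 3 → ℝ) → ℝ} (hf : f ∈ bubbleSpace lam (k + 1) rv re rf)
    (w : Fin 3 → ℝ) :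
    (fun x => fderiv ℝ f x w) ∈
      bubbleSpace lam k (max (rv - 1) (-1)) (max (re - 1) (-1)) (max (rf - 1) (-1)) := by
  have hdiff {g : (Fin 3 → ℝ) → ℝ} (hg : g ∈ bubbleSpace lam (k + 1) rv re rf) :
      Differentiable ℝ g :=
    (contDiff_of_mem_bubbleSpace hg (n := 1)).differentiable one_ne_zero
  induction hf using Submodule.span_induction with
  | mem f hf =>
    obtain ⟨α, hα, rfl⟩ := hf
    rw [fderiv_bernBary3]
    refine Submodule.sum_mem _ fun i _ => ?_
    rcases eq_or_ne (α i) 0 with hi | hi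
    · simp [hi]
    obtain ⟨δ, rfl⟩ := exists_add_single_one_eq hi
    rw [add_tsub_cancel_right]
    exact Submodule.smul_mem _ _
      (Submodule.subset_span ⟨δ, mem_interiorLattice_of_add_single hα, rfl⟩)
  | zero =>
    convert Submodule.zero_mem _ using 2 with x
    simp
  | add f g hf hg ihf ihg =>
    convert Submodule.add_mem _ ihf ihg using 2 with x
    rw [fderiv_add (hdiff hf x) (hdiff hg x)]; rfl
  | smul c f hf ihf =>
    convert Submodule.smul_mem _ c ihf using 2 with x
    rw [fderiv_const_smul (hdiff hf x)]; rfl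

theorem diverg_mem_bubbleSpace {u : (Fin 3 → ℝ) → Fin 3 → ℝ}
    (hu : ∀ m, (fun x => u x m) ∈ bubbleSpace lam (k + 1) rv re rf) :
    diverg u ∈ bubbleSpace lam k (max (rv - 1) (-1)) (max (re - 1) (-1)) (max (rf - 1) (-1)) := by
  have : diverg u = ∑ m, fun x => fderiv ℝ (fun y => u y m) x (Pi.single m 1) := by
    funext x
    rw [Finset.sum_apply, diverg]
  rw [this]
  exact Submodule.sum_mem _ fun m _ => fderiv_mem_bubbleSpace (hu m) _

theorem contDiff_of_forall_mem_bubbleSpace {u : (Fin 3 → ℝ) → Fin 3 → ℝ}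
    (hu : ∀ m, (fun x => u x m) ∈ bubbleSpace lam k rv re rf) {n : WithTop ℕ∞} : ContDiff ℝ n u :=
  contDiff_pi.2 fun m => contDiff_of_mem_bubbleSpace (hu m)

end Divergence

section BubbleDivergence

variable (v : Fin 4 → Fin 3 → ℝ) (lam : Fin 4 → ((Fin 3 → ℝ) →ᵃ[ℝ] ℝ)) (k : ℕ) (rv re rf : ℤ)

/-- The space `𝔹_k^{div}(T; r)` of vector-valued bubbles with vanishing normal trace. -/
def bubbleDivSpace : Submodule ℝ ((Fin 3 → ℝ) → Fin 3 → ℝ) where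
  carrier := {u | (∀ m, (fun x => u x m) ∈ bubbleSpace lam k rv re rf) ∧ normalTraceZero v u}
  zero_mem' := ⟨fun _ => Submodule.zero_mem _, fun _ _ _ _ _ => by simp⟩
  add_mem' := fun ⟨hu, hu'⟩ ⟨hw, hw'⟩ => ⟨fun m => Submodule.add_mem _ (hu m) (hw m),
    fun j x hx n hn => by
      simp only [Pi.add_apply, mul_add, Finset.sum_add_distrib, hu' j x hx n hn, hw' j x hx n hn,
        add_zero]⟩
  smul_mem' := fun c u ⟨hu, hu'⟩ => ⟨fun m => Submodule.smul_mem _ c (hu m),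
    fun j x hx n hn => by
      simp only [Pi.smul_apply, smul_eq_mul, mul_left_comm _ c, ← Finset.mul_sum, hu' j x hx n hn,
        mul_zero]⟩

/-- The divergence as a linear map on `𝔹_k^{div}(T; r)`. -/
noncomputable def bubbleDivergence :
    bubbleDivSpace v lam k rv re rf →ₗ[ℝ] ((Fin 3 → ℝ) → ℝ) where
  toFun u := diverg u
  map_add' u w := funext fun x => by
    have hu := (contDiff_of_forall_mem_bubbleSpace u.2.1).differentiable one_ne_zero x
    have hw := (contDiff_of_forall_mem_bubbleSpace w.2.1).differentiable one_ne_zero x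
    simp [diverg_eq_trace hu, diverg_eq_trace hw, diverg_eq_trace (hu.add hw), fderiv_add hu hw]
  map_smul' c u := funext fun x => by
    have hu := (contDiff_of_forall_mem_bubbleSpace u.2.1).differentiable one_ne_zero x
    simp [diverg_eq_trace hu, diverg_eq_trace (hu.const_smul c), fderiv_const_smul hu]

end BubbleDivergence

section Bubble

variable (b : AffineBasis (Fin 4) ℝ (Fin 3 → ℝ)) {k : ℕ} {rv re rf : ℤ}

theorem coord_linear_eq_zero_of_normalTraceZero {u : (Fin 3 → ℝ) → Fin 3 → ℝ}
    (hu : normalTraceZero b u) {j : Fin 4} {x : Fin 3 → ℝ}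
    (hx : x ∈ convexHull ℝ (Set.range b)) (hj : b.coord j x = 0) :
    (b.coord j).linear (u x) = 0 := by
  have hlin (y : Fin 3 → ℝ) :
      ∑ m, (b.coord j).linear (Pi.single m 1) * y m = (b.coord j).linear y := by
    rw [LinearMap.pi_apply_eq_sum_univ (b.coord j).linear y]
    simp only [smul_eq_mul, mul_comm, ← Pi.single_apply, Pi.single_comm]
  rw [← hlin]
  refine hu j x ((mem_convexHull_image_iff b).2 ⟨(mem_convexHull_range_iff b).1 hx, ?_⟩) _ ?_
  · simpa using hj
  · intro i hi l hl
    have h := hlin (b i - b l)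
    simpa only [barycentric_coord_linear_sub, hi.symm, hl.symm, if_false, sub_zero,
      Pi.sub_apply] using h

theorem smul_edge_mem_bubbleDivSpace {α : Fin 4 → ℕ} (hα : α ∈ interiorLattice k rv re rf)
    {i j : Fin 4} (hi : α i ≠ 0) (hj : α j ≠ 0) :
    (fun x => bernBary3 b.coord α x • (b j - b i)) ∈
      bubbleDivSpace b b.coord k rv re rf := by
  refine ⟨fun m => ?_, fun l x hx w hw => ?_⟩
  · simp only [Pi.smul_apply, smul_eq_mul, mul_comm _ ((b j - b i) m)]
    exact Submodule.smul_mem _ _ (Submodule.subset_span ⟨α, hα, rfl⟩)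
  · rcases eq_or_ne (α l) 0 with hl | hl
    · have horth := hw j (fun h => hj (h ▸ hl)) i fun h => hi (h ▸ hl)
      simp only [Pi.smul_apply, Pi.sub_apply, smul_eq_mul, mul_left_comm (w _), ← Finset.mul_sum,
        horth, mul_zero]
    · have hxl : b.coord l x = 0 := ((mem_convexHull_image_iff b).1 hx).2 l (by simp)
      have hzero : bernBary3 b.coord α x = 0 :=
        Finset.prod_eq_zero (Finset.mem_univ l) (by rw [hxl, zero_pow hl])
      simp [hzero]

theorem setIntegral_diverg_eq_zero {u : (Fin 3 → ℝ) → Fin 3 → ℝ} (hu : ContDiff ℝ 1 u)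
    (hu' : normalTraceZero b u) : ∫ x in convexHull ℝ (Set.range b), diverg u x = 0 := by
  simp only [diverg_eq_trace (hu.differentiable one_ne_zero _)]
  exact setIntegral_trace_fderiv_eq_zero_of_tangent b hu fun i x hx hi =>
    coord_linear_eq_zero_of_normalTraceZero b hu' hx hi

theorem setIntegral_bernBary3_pos (α : Fin 4 → ℕ) :
    0 < ∫ x in convexHull ℝ (Set.range b), bernBary3 b.coord α x := by
  have hcompact := (Set.finite_range b).isCompact_convexHull (𝕜 := ℝ)
  have hcont : Continuous (bernBary3 b.coord α) :=
    (contDiff_bernBary3 _ α (n := 0)).continuous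
  rw [setIntegral_pos_iff_support_of_nonneg_ae]
  · refine (isOpen_interior.measure_pos volume
      ⟨_, b.centroid_mem_interior_convexHull⟩).trans_le (measure_mono fun x hx => ?_)
    refine ⟨(Finset.prod_pos fun i _ => pow_pos ?_ _).ne', interior_subset hx⟩
    rw [b.interior_convexHull] at hx
    exact hx i
  · refine ae_restrict_of_forall_mem hcompact.measurableSet fun x hx => ?_
    exact Finset.prod_nonneg fun i _ => pow_nonneg ((mem_convexHull_range_iff b).1 hx i) _
  · exact hcont.continuousOn.integrableOn_compact hcompact

end Bubble

section UnitTransfer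

/-- The Bernstein monomial `λ^α / α!`. With this normalization, differentiating along the edge
`b j - b i` is a difference of two normalized monomials, without multiplicities. -/
noncomputable def normalizedBernstein (lam : Fin 4 → ((Fin 3 → ℝ) →ᵃ[ℝ] ℝ)) (α : Fin 4 → ℕ) :
    (Fin 3 → ℝ) → ℝ :=
  (∏ i, ((α i).factorial : ℝ))⁻¹ • bernBary3 lam α

theorem prod_factorial_add_single_one {ι : Type*} [Fintype ι] [DecidableEq ι] (δ : ι → ℕ) (i : ι) :
    ∏ l, ((δ + Pi.single i 1 : ι → ℕ) l).factorial = (δ i + 1) * ∏ l, (δ l).factorial := by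
  rw [← Finset.mul_prod_erase _ _ (Finset.mem_univ i),
    ← Finset.mul_prod_erase _ (fun l => (δ l).factorial) (Finset.mem_univ i), ← mul_assoc]
  congr 1
  · simp [Nat.factorial_succ]
  · exact Finset.prod_congr rfl fun l hl => by simp [(Finset.mem_erase.1 hl).1]

theorem smul_bernBary3_eq_normalizedBernstein (lam : Fin 4 → ((Fin 3 → ℝ) →ᵃ[ℝ] ℝ))
    {α : Fin 4 → ℕ} {i : Fin 4} (hi : α i ≠ 0) :
    ((∏ l, ((α l).factorial : ℝ))⁻¹ * α i) • bernBary3 lam (α - Pi.single i 1) =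
      normalizedBernstein lam (α - Pi.single i 1) := by
  obtain ⟨δ, rfl⟩ := exists_add_single_one_eq hi
  rw [add_tsub_cancel_right, normalizedBernstein, ← Nat.cast_prod, ← Nat.cast_prod,
    prod_factorial_add_single_one, Pi.add_apply, Pi.single_eq_same]
  congr 1
  push_cast
  field_simp

variable (b : AffineBasis (Fin 4) ℝ (Fin 3 → ℝ)) {k : ℕ} {rv re rf : ℤ}

theorem fderiv_normalizedBernstein_edge {α : Fin 4 → ℕ} {i j : Fin 4} (hi : α i ≠ 0)
    (hj : α j ≠ 0) :
    (fun x => fderiv ℝ (normalizedBernstein b.coord α) x (b j - b i)) =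
      normalizedBernstein b.coord (α - Pi.single j 1) -
        normalizedBernstein b.coord (α - Pi.single i 1) := by
  have hedge : (fun x => fderiv ℝ (bernBary3 b.coord α) x (b j - b i)) =
      (α j : ℝ) • bernBary3 b.coord (α - Pi.single j 1) -
        (α i : ℝ) • bernBary3 b.coord (α - Pi.single i 1) := by
    simp only [fderiv_bernBary3, barycentric_coord_linear_sub, mul_sub, sub_smul,
      Finset.sum_sub_distrib, mul_ite, mul_one, mul_zero, ite_smul, zero_smul, Finset.sum_ite_eq',
      Finset.mem_univ, if_true]
  rw [← smul_bernBary3_eq_normalizedBernstein _ hi, ← smul_bernBary3_eq_normalizedBernstein _ hj,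
    mul_smul, mul_smul, ← smul_sub, ← hedge]
  funext x
  rw [normalizedBernstein,
    fderiv_const_smul ((contDiff_bernBary3 _ α).differentiable one_ne_zero x)]
  rfl

theorem normalizedBernstein_sub_mem_range_of_mem_interiorLattice {α : Fin 4 → ℕ}
    (hα : α ∈ interiorLattice k rv re rf) {i j : Fin 4} (hi : α i ≠ 0) (hj : α j ≠ 0) :
    normalizedBernstein b.coord (α - Pi.single j 1) -
        normalizedBernstein b.coord (α - Pi.single i 1) ∈
      LinearMap.range (bubbleDivergence b b.coord k rv re rf) := by
  have hmem : (fun x => normalizedBernstein b.coord α x • (b j - b i)) ∈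
      bubbleDivSpace b b.coord k rv re rf := by
    convert Submodule.smul_mem _ (∏ l, ((α l).factorial : ℝ))⁻¹
      (smul_edge_mem_bubbleDivSpace b hα hi hj) using 2 with x
    exact mul_smul _ (bernBary3 b.coord α x) (b j - b i)
  refine ⟨⟨_, hmem⟩, ?_⟩
  rw [← fderiv_normalizedBernstein_edge b hi hj, ← diverg_smul_const]
  · rfl
  · exact ((contDiff_bernBary3 _ α).differentiable one_ne_zero).const_smul _

theorem add_single_add_single_mem_interiorLattice {δ : Fin 4 → ℕ} {i j l : Fin 4} (hij : i ≠ j)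
    (hli : l ≠ i) (hlj : l ≠ j) (hl : δ l ≠ 0)
    (hi : δ + Pi.single i 1 ∈ interiorLattice k (rv - 1) (-1) (-1))
    (hj : δ + Pi.single j 1 ∈ interiorLattice k (rv - 1) (-1) (-1)) :
    δ + Pi.single i 1 + Pi.single j 1 ∈ interiorLattice (k + 1) rv 0 (-1) := by
  rw [mem_interiorLattice_neg_one_iff] at hi hj
  have hsum : ∑ m, (δ + Pi.single i 1 + Pi.single j 1 : Fin 4 → ℕ) m = k + 1 := by
    rw [sum_add_single_one, hi.1]
  refine mem_interiorLattice_iff.2 ⟨hsum, fun m => ?_, fun a c hac => ?_, fun m => by lia⟩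
  · have him := hi.2 m
    have hjm := hj.2 m
    simp only [Pi.add_apply, Pi.single_apply] at him hjm ⊢
    split_ifs at him hjm ⊢ with hmi hmj <;> grind
  · have hmem : a = i ∨ a = j ∨ a = l ∨ c = i ∨ c = j ∨ c = l := by lia
    simp only [Pi.add_apply, Pi.single_apply]
    rcases hmem with rfl | rfl | rfl | rfl | rfl | rfl <;> lia

theorem add_single_mem_interiorLattice_of_support_subset_pair (hrv : 1 ≤ rv) {δ : Fin 4 → ℕ}
    {i j : Fin 4} (hij : i ≠ j) (hδ : ∀ l, l ≠ i → l ≠ j → δ l = 0)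
    (hi : δ + Pi.single i 1 ∈ interiorLattice k (rv - 1) (-1) (-1))
    (hj : δ + Pi.single j 1 ∈ interiorLattice k (rv - 1) (-1) (-1)) :
    δ i ≠ 0 ∧ δ j ≠ 0 ∧ ∀ c, δ + Pi.single c 1 ∈ interiorLattice k (rv - 1) (-1) (-1) := by
  simp only [mem_interiorLattice_neg_one_iff, sum_add_single_one] at hi hj ⊢
  have hpair : δ i + δ j + 1 = k := by
    rw [← hi.1, ← Finset.sum_subset (Finset.subset_univ {i, j}) (by grind), Finset.sum_pair hij]
  have hi' := hi.2 i
  have hj' := hj.2 j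
  simp only [Pi.add_apply, Pi.single_eq_same, Nat.cast_add, Nat.cast_one] at hi' hj'
  refine ⟨by lia, by lia, fun c => ⟨hi.1, fun l => ?_⟩⟩
  simp only [Pi.add_apply, Pi.single_apply]
  have := hδ l
  grind

theorem normalizedBernstein_add_single_sub_mem_range_of_ne_zero {δ : Fin 4 → ℕ} {i j l : Fin 4}
    (hij : i ≠ j) (hli : l ≠ i) (hlj : l ≠ j) (hl : δ l ≠ 0)
    (hi : δ + Pi.single i 1 ∈ interiorLattice k (rv - 1) (-1) (-1))
    (hj : δ + Pi.single j 1 ∈ interiorLattice k (rv - 1) (-1) (-1)) :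
    normalizedBernstein b.coord (δ + Pi.single i 1) -
        normalizedBernstein b.coord (δ + Pi.single j 1) ∈
      LinearMap.range (bubbleDivergence b b.coord (k + 1) rv 0 (-1)) := by
  have h := normalizedBernstein_sub_mem_range_of_mem_interiorLattice b
    (add_single_add_single_mem_interiorLattice hij hli hlj hl hi hj) (i := i) (j := j)
    (by simp) (by simp)
  rwa [add_tsub_cancel_right, add_right_comm, add_tsub_cancel_right] at h

theorem normalizedBernstein_add_single_sub_mem_range (hrv : 1 ≤ rv) {δ : Fin 4 → ℕ} {i j : Fin 4}
    (hi : δ + Pi.single i 1 ∈ interiorLattice k (rv - 1) (-1) (-1))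
    (hj : δ + Pi.single j 1 ∈ interiorLattice k (rv - 1) (-1) (-1)) :
    normalizedBernstein b.coord (δ + Pi.single i 1) -
        normalizedBernstein b.coord (δ + Pi.single j 1) ∈
      LinearMap.range (bubbleDivergence b b.coord (k + 1) rv 0 (-1)) := by
  rcases eq_or_ne i j with rfl | hij
  · simp
  by_cases hδ : ∀ l, l ≠ i → l ≠ j → δ l = 0
  · -- Now `δ + e_i + e_j` is supported on `{i, j}`, which `r^e = 0` forbids: use a third vertex.
    obtain ⟨c, hci, hcj⟩ : ∃ c : Fin 4, c ≠ i ∧ c ≠ j := by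
      clear * -
      decide +revert
    obtain ⟨hδi, hδj, hc⟩ :=
      add_single_mem_interiorLattice_of_support_subset_pair hrv hij hδ hi hj
    rw [← sub_add_sub_cancel _ (normalizedBernstein b.coord (δ + Pi.single c 1))]
    exact Submodule.add_mem _
      (normalizedBernstein_add_single_sub_mem_range_of_ne_zero b hci.symm hij.symm hcj.symm hδj
        hi (hc c))
      (normalizedBernstein_add_single_sub_mem_range_of_ne_zero b hcj hci.symm hij hδi (hc c) hj)
  · push Not at hδ
    obtain ⟨l, hli, hlj, hl⟩ := hδ
    exact normalizedBernstein_add_single_sub_mem_range_of_ne_zero b hij hli hlj hl hi hj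

theorem normalizedBernstein_sub_normalizedBernstein_mem_range (hrv : 1 ≤ rv) {β γ : Fin 4 → ℕ}
    (hβ : β ∈ interiorLattice k (rv - 1) (-1) (-1))
    (hγ : γ ∈ interiorLattice k (rv - 1) (-1) (-1)) :
    normalizedBernstein b.coord β - normalizedBernstein b.coord γ ∈
      LinearMap.range (bubbleDivergence b b.coord (k + 1) rv 0 (-1)) := by
  have hle_iff (α : Fin 4 → ℕ) : α ∈ interiorLattice k (rv - 1) (-1) (-1) ↔
      ∑ i, α i = k ∧ ∀ i, (α i : ℤ) ≤ k - rv := by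
    rw [mem_interiorLattice_neg_one_iff]
    exact and_congr_right fun _ => forall_congr' fun i => by lia
  have hle (α : Fin 4 → ℕ) : α ∈ interiorLattice k (rv - 1) (-1) (-1) ↔
      ∑ i, α i = k ∧ α ≤ fun _ => (k - rv).toNat := by
    have hk : 0 ≤ k - rv := ((Nat.cast_nonneg _).trans (((hle_iff β).1 hβ).2 0))
    rw [hle_iff]
    exact and_congr_right fun _ => forall_congr' fun i => (Int.le_toNat hk).symm
  refine unit_transfer_induction (P := fun γ => normalizedBernstein b.coord β -
    normalizedBernstein b.coord γ ∈ LinearMap.range (bubbleDivergence b b.coord (k + 1) rv 0 (-1)))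
    (fun δ i j hδ hi hj h => ?_) ((hle β).1 hβ).2 ((hle γ).1 hγ).2 ((hle β).1 hβ).1
    ((hle γ).1 hγ).1 (by simp)
  rw [← sub_add_sub_cancel _ (normalizedBernstein b.coord (δ + Pi.single i 1))]
  exact Submodule.add_mem _ h (normalizedBernstein_add_single_sub_mem_range b hrv
    ((hle _).2 ⟨by rwa [sum_add_single_one], hi⟩) ((hle _).2 ⟨by rwa [sum_add_single_one], hj⟩))

theorem bubbleSpace_le_range_sup_span (hrv : 1 ≤ rv) {β : Fin 4 → ℕ}
    (hβ : β ∈ interiorLattice k (rv - 1) (-1) (-1)) :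
    bubbleSpace b.coord k (rv - 1) (-1) (-1) ≤
      LinearMap.range (bubbleDivergence b b.coord (k + 1) rv 0 (-1)) ⊔
        Submodule.span ℝ {bernBary3 b.coord β} := by
  refine Submodule.span_le.2 ?_
  rintro _ ⟨α, hα, rfl⟩
  have hsub := normalizedBernstein_sub_normalizedBernstein_mem_range b hrv hα hβ
  have hN : normalizedBernstein b.coord α ∈
      LinearMap.range (bubbleDivergence b b.coord (k + 1) rv 0 (-1)) ⊔
        Submodule.span ℝ {bernBary3 b.coord β} := by
    rw [← sub_add_cancel (normalizedBernstein b.coord α) (normalizedBernstein b.coord β)]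
    exact Submodule.add_mem_sup hsub
      (Submodule.smul_mem _ _ (Submodule.mem_span_singleton_self _))
  exact (Submodule.smul_mem_iff _ (by positivity)).1 hN

end UnitTransfer

theorem mem_range_bubbleDivergence_iff (b : AffineBasis (Fin 4) ℝ (Fin 3 → ℝ)) {rv : ℤ}
    (hrv : 1 ≤ rv) {k : ℕ} {p : (Fin 3 → ℝ) → ℝ} :
    p ∈ LinearMap.range (bubbleDivergence b b.coord (k + 1) rv 0 (-1)) ↔
      p ∈ bubbleSpace b.coord k (rv - 1) (-1) (-1) ∧
        ∫ x in convexHull ℝ (Set.range b), p x = 0 := by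
  have hrange {q : (Fin 3 → ℝ) → ℝ}
      (hq : q ∈ LinearMap.range (bubbleDivergence b b.coord (k + 1) rv 0 (-1))) :
      q ∈ bubbleSpace b.coord k (rv - 1) (-1) (-1) ∧
        ∫ x in convexHull ℝ (Set.range b), q x = 0 := by
    obtain ⟨⟨u, hu, hu'⟩, rfl⟩ := hq
    refine ⟨?_, setIntegral_diverg_eq_zero b (contDiff_of_forall_mem_bubbleSpace hu) hu'⟩
    have h := diverg_mem_bubbleSpace hu
    rwa [max_eq_left (by lia : -1 ≤ rv - 1)] at h
  refine ⟨hrange, fun ⟨hp, hp0⟩ => ?_⟩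
  rcases (interiorLattice k (rv - 1) (-1) (-1)).eq_empty_or_nonempty with hS | ⟨β, hβ⟩
  · rw [bubbleSpace, hS, Set.image_empty, Submodule.span_empty, Submodule.mem_bot] at hp
    exact hp ▸ Submodule.zero_mem _
  obtain ⟨q, hq, r, hr, rfl⟩ := Submodule.mem_sup.1 (bubbleSpace_le_range_sup_span b hrv hβ hp)
  obtain ⟨c, rfl⟩ := Submodule.mem_span_singleton.1 hr
  have hint {f : (Fin 3 → ℝ) → ℝ} (hf : ContDiff ℝ 0 f) :
      IntegrableOn f (convexHull ℝ (Set.range b)) :=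
    hf.continuous.continuousOn.integrableOn_compact
      ((Set.finite_range b).isCompact_convexHull (𝕜 := ℝ))
  have hc : c * ∫ x in convexHull ℝ (Set.range b), bernBary3 b.coord β x = 0 := by
    rw [← hp0, ← integral_const_mul, ← zero_add (∫ x in _, c * _), ← (hrange hq).2]
    exact (integral_add (hint (contDiff_of_mem_bubbleSpace (hrange hq).1))
      ((hint (contDiff_bernBary3 _ β)).const_mul c)).symm
  rw [(mul_eq_zero_iff_right (setIntegral_bernBary3_pos b β).ne').1 hc, zero_smul, add_zero]
  exact hq

theorem div_bubble_stability_re_zero_general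
    (v : Fin 4 → (Fin 3 → ℝ)) (hv : AffineIndependent ℝ v)
    (lam : Fin 4 → ((Fin 3 → ℝ) →ᵃ[ℝ] ℝ))
    (hlam : ∀ i j, lam i (v j) = if i = j then 1 else 0)
    (rv : ℤ) (hrv : 1 ≤ rv) (k : ℕ) :
    {p : (Fin 3 → ℝ) → ℝ | ∃ u : (Fin 3 → ℝ) → (Fin 3 → ℝ),
        (∀ m : Fin 3, (fun x => u x m) ∈ bubbleSpace lam (k + 1) rv 0 (-1)) ∧
        normalTraceZero v u ∧ p = diverg u}
      = {p : (Fin 3 → ℝ) → ℝ |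
          p ∈ bubbleSpace lam k (rv - 1) (-1) (-1) ∧
          (∫ x in convexHull ℝ (Set.range v), p x) = 0} := by
  obtain ⟨b, rfl, rfl⟩ := exists_affineBasis_coord_eq hv (by simp) hlam
  ext p
  rw [Set.mem_ofPred_eq, Set.mem_ofPred_eq, ← mem_range_bubbleDivergence_iff b hrv]
  exact ⟨fun ⟨u, hu, hu', hp⟩ => ⟨⟨u, hu, hu'⟩, hp.symm⟩,
    fun ⟨⟨u, hu, hu'⟩, hp⟩ => ⟨u, hu, hu', hp.symm⟩⟩

/-- div stability of the `H(div)` bubble space for `r₂ = (rᵛ, 0, −1)`,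
`rᵛ ≥ 1`, `k ≥ 2rᵛ + 1` and `r₃ = r₂ ⊖ 1 = (rᵛ−1, −1, −1)`:
`div 𝔹ᵈⁱᵛ_k(T; r₂) = 𝔹_{k−1}(T; r₃)/ℝ`, where
`𝔹ᵈⁱᵛ_k(T; r₂) = {u ∈ 𝔹³_k(T; r₂) : u ⋅ n = 0 on ∂T}`. -/
theorem div_bubble_stability_re_zero
    (v : Fin 4 → (Fin 3 → ℝ)) (hv : AffineIndependent ℝ v)
    (lam : Fin 4 → ((Fin 3 → ℝ) →ᵃ[ℝ] ℝ))
    (hlam : ∀ i j, lam i (v j) = if i = j then 1 else 0)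
    (hsum : ∀ x : Fin 3 → ℝ, ∑ i, lam i x = 1)
    (rv : ℤ) (hrv : 1 ≤ rv)
    (k : ℕ) (hk : 2 * rv + 1 ≤ (k : ℤ))
    (hS : (interiorLattice (k - 1) (rv - 1) (-1) (-1)).Nonempty) :
    {p : (Fin 3 → ℝ) → ℝ | ∃ u : (Fin 3 → ℝ) → (Fin 3 → ℝ),
        (∀ m : Fin 3, (fun x => u x m) ∈ bubbleSpace lam k rv 0 (-1)) ∧
        normalTraceZero v u ∧ p = diverg u}
      = {p : (Fin 3 → ℝ) → ℝ |
          p ∈ bubbleSpace lam (k - 1) (rv - 1) (-1) (-1) ∧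
          (∫ x in convexHull ℝ (Set.range v), p x) = 0} := by
  obtain ⟨k, rfl⟩ := Nat.exists_eq_add_of_le' (by lia : 1 ≤ k)
  exact div_bubble_stability_re_zero_general v hv lam hlam rv hrv k
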